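/- Let f=(m,n,k) be a triple of integers with discriminant Δ=k²−4mn>0 not a perfect square (so m≠0 and the roots below are irrational). Let ξ⁺(f)=(−k+√Δ)/(2m) and ξ⁻(f)=(−k−√Δ)/(2m) be the two roots of mξ²+kξ+n=0. Then the regular continued fraction expansions of ξ⁺(f) and of ξ⁻(f) are both eventually periodic, and their periods coincide, up to cyclic permutation, with the reverses of each other. -/

import Mathlib

/-- Iterates of the Gauss map starting from `ξ`. -/
noncomputable def gaussIter (ξ : ℝ) : ℕ → ℝ
  | 0 => ξ
  | n + 1 => 1 / (gaussIter ξ n - (⌊gaussIter ξ n⌋ : ℝ))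

/-- The `n`-th partial quotient of the regular continued fraction expansion of `ξ`. -/
noncomputable def cfTerm (ξ : ℝ) (n : ℕ) : ℤ := ⌊gaussIter ξ n⌋

/-- The continued fraction expansion of `ξ` is periodic with period length `P` from index `N`. -/
def IsEventuallyPeriodicCF (ξ : ℝ) (N P : ℕ) : Prop :=
  1 ≤ P ∧ ∀ j : ℕ, cfTerm ξ (N + j + P) = cfTerm ξ (N + j)

/-- `s` is the (minimal) period of the eventually periodic regular continued fraction
expansion of `ξ`; it is well defined up to cyclic permutation. -/
def IsCFPeriod (s : List ℤ) (ξ : ℝ) : Prop :=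
  s ≠ [] ∧
  (∃ N : ℕ, ∀ j : ℕ, cfTerm ξ (N + j) = s.getD (j % s.length) 0) ∧
  (∀ P : ℕ, 1 ≤ P → (∃ N : ℕ, IsEventuallyPeriodicCF ξ N P) → s.length ≤ P)

/-- The value of the binary quadratic form `f = (m, n, k)`, i.e. `m*x^2 + n*y^2 + k*x*y`. -/
def qval (f : ℤ × ℤ × ℤ) (x y : ℤ) : ℤ := f.1 * x ^ 2 + f.2.1 * y ^ 2 + f.2.2 * x * y

/-- The discriminant `k^2 - 4*m*n` of the form `f = (m, n, k)`. -/
def formDisc (f : ℤ × ℤ × ℤ) : ℤ := f.2.2 ^ 2 - 4 * f.1 * f.2.1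

/-- `SL(2,ℤ)`-equivalence of binary quadratic forms. -/
def SLEquiv (f g : ℤ × ℤ × ℤ) : Prop :=
  ∃ a b c d : ℤ, a * d - b * c = 1 ∧
    ∀ x y : ℤ, qval g x y = qval f (a * x + b * y) (c * x + d * y)

/-- The root with the plus sign of `m*ξ^2 + k*ξ + n = 0`, for `f = (m, n, k)`. -/
noncomputable def xiPlus (f : ℤ × ℤ × ℤ) : ℝ :=
  (-(f.2.2 : ℝ) + Real.sqrt ((formDisc f : ℤ) : ℝ)) / (2 * (f.1 : ℝ))

/-- The root with the minus sign of `m*ξ^2 + k*ξ + n = 0`, for `f = (m, n, k)`. -/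
noncomputable def xiMinus (f : ℤ × ℤ × ℤ) : ℝ :=
  (-(f.2.2 : ℝ) - Real.sqrt ((formDisc f : ℤ) : ℝ)) / (2 * (f.1 : ℝ))

/-- The conjugate `(m, n, -k)` of the form `(m, n, k)`. -/
def conjF (f : ℤ × ℤ × ℤ) : ℤ × ℤ × ℤ := (f.1, f.2.1, -f.2.2)

/-- The adjoint `(-n, -m, k)` of the form `(m, n, k)`. -/
def adjF (f : ℤ × ℤ × ℤ) : ℤ × ℤ × ℤ := (-f.2.1, -f.1, f.2.2)

/-- The antipodal `(-n, -m, -k)` of the form `(m, n, k)`. -/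
def antipF (f : ℤ × ℤ × ℤ) : ℤ × ℤ × ℤ := (-f.2.1, -f.1, -f.2.2)

/-- A form `(m, n, k)` is primitive if `gcd(m, n, k) = 1`. -/
def IsPrimitiveForm (f : ℤ × ℤ × ℤ) : Prop := Int.gcd f.1 (Int.gcd f.2.1 f.2.2) = 1

theorem gaussIter_add (ξ : ℝ) (i j : ℕ) : gaussIter ξ (i + j) = gaussIter (gaussIter ξ i) j := by
  induction j with
  | zero => rfl
  | succ j ih => rw [← Nat.add_assoc]; simp only [gaussIter, ih]

theorem irr_sub {x : ℝ} (hx : Irrational x) (a : ℤ) : Irrational (x - a) := by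
  simpa using hx

theorem irr_step {x : ℝ} (hx : Irrational x) (a : ℤ) : Irrational (1 / (x - a)) := by
  rw [one_div]; exact irrational_inv_iff.mpr (irr_sub hx a)

theorem irr_gauss {x : ℝ} (hx : Irrational x) (n : ℕ) : Irrational (gaussIter x n) := by
  induction n with
  | zero => exact hx
  | succ n ih => exact irr_step ih _

theorem fract_bounds {x : ℝ} (hx : Irrational x) : 0 < x - ⌊x⌋ ∧ x - ⌊x⌋ < 1 := by
  have h1 := Int.floor_le x
  have h2 := Int.lt_floor_add_one x
  have h3 := (irr_sub hx ⌊x⌋).ne_zero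
  refine ⟨lt_of_le_of_ne (by linarith) (Ne.symm h3), by linarith⟩

theorem one_lt_gauss {x : ℝ} (hx : Irrational x) (n : ℕ) : 1 < gaussIter x (n + 1) := by
  obtain ⟨h1, h2⟩ := fract_bounds (irr_gauss hx n)
  simp only [gaussIter]
  exact (one_lt_div h1).mpr h2

/-- tails agree -/
def TailEq (u v : ℝ) : Prop := ∃ i j : ℕ, gaussIter u i = gaussIter v j

theorem TailEq.symm {u v : ℝ} (h : TailEq u v) : TailEq v u := by
  obtain ⟨i, j, h⟩ := h
  exact ⟨j, i, h.symm⟩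

theorem TailEq.trans {u v w : ℝ} (h : TailEq u v) (h' : TailEq v w) : TailEq u w := by
  obtain ⟨i, j, h⟩ := h
  obtain ⟨k, l, h'⟩ := h'
  refine ⟨i + k, l + j, ?_⟩
  rw [gaussIter_add, h, ← gaussIter_add, Nat.add_comm, gaussIter_add, h', ← gaussIter_add]

theorem tail_add_int (u : ℝ) (a : ℤ) : TailEq (u + a) u := by
  refine ⟨1, 1, ?_⟩
  simp [gaussIter]

theorem tail_sub_int (u : ℝ) (a : ℤ) : TailEq (u - a) u := by
  simpa [sub_eq_add_neg] using tail_add_int u (-a)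

theorem tail_inv_of_one_lt {u : ℝ} (h : 1 < u) : TailEq (1 / u) u := by
  refine ⟨1, 0, ?_⟩
  have : ⌊1 / u⌋ = 0 := by
    rw [Int.floor_eq_zero_iff]
    refine ⟨by positivity, ?_⟩
    rw [div_lt_one (by linarith)]; exact h
  simp only [gaussIter, this]
  simp

theorem tail_inv_pos {u : ℝ} (hu : Irrational u) (h : 0 < u) : TailEq (1 / u) u := by
  rcases lt_trichotomy u 1 with h1 | h1 | h1
  · have := tail_inv_of_one_lt (u := 1 / u) ((one_lt_div h).mpr h1)
    rw [one_div_one_div] at this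
    exact this.symm
  · exact absurd h1 hu.ne_one
  · exact tail_inv_of_one_lt h1

theorem tail_one_sub_aux {f : ℝ} (hf : Irrational f) (h0 : 0 < f) (h1 : f < 1 / 2) :
    TailEq (1 - f) f := by
  have e1 : Irrational (1 - f) := by
    simpa using (irrational_ratCast_sub_iff (q := 1)).mpr hf
  have hp : 0 < 1 - f := by linarith
  have s1 := (tail_inv_pos e1 hp).symm
  have hr : 1 / (1 - f) = f / (1 - f) + ((1 : ℤ) : ℝ) := by
    field_simp; push_cast; ring
  have s2 := tail_add_int (f / (1 - f)) 1
  rw [← hr] at s2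
  have irr2 : Irrational (f / (1 - f)) := by
    have : f / (1 - f) = 1 / (1 - f) - ((1 : ℤ) : ℝ) := by rw [hr]; ring
    rw [this]
    apply irr_sub
    rw [one_div]; exact irrational_inv_iff.mpr e1
  have s3 := (tail_inv_pos irr2 (by positivity)).symm
  have hr2 : 1 / (f / (1 - f)) = 1 / f - ((1 : ℤ) : ℝ) := by
    field_simp; push_cast; ring
  rw [hr2] at s3
  exact s1.trans (s2.trans (s3.trans ((tail_sub_int _ _).trans (tail_inv_pos hf h0))))

theorem tail_one_sub {f : ℝ} (hf : Irrational f) (h0 : 0 < f) (h1 : f < 1) :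
    TailEq (1 - f) f := by
  have e1 : Irrational (1 - f) := by
    simpa using (irrational_ratCast_sub_iff (q := 1)).mpr hf
  rcases lt_trichotomy f (1 / 2) with h | h | h
  · exact tail_one_sub_aux hf h0 h
  · exfalso
    apply hf
    exact ⟨1 / 2, by rw [h]; norm_num⟩
  · have := tail_one_sub_aux e1 (by linarith) (by linarith)
    rw [sub_sub_cancel] at this
    exact this.symm

theorem tail_neg {u : ℝ} (hu : Irrational u) : TailEq (-u) u := by
  obtain ⟨h0, h1⟩ := fract_bounds hu
  have s := tail_one_sub (irr_sub hu ⌊u⌋) h0 h1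
  have s1 := tail_add_int (-u) (1 + ⌊u⌋)
  have e : -u + ((1 + ⌊u⌋ : ℤ) : ℝ) = 1 - (u - ⌊u⌋) := by push_cast; ring
  rw [e] at s1
  exact s1.symm.trans (s.trans (tail_sub_int _ _))

theorem tail_inv {u : ℝ} (hu : Irrational u) : TailEq (1 / u) u := by
  rcases lt_trichotomy u 0 with h | h | h
  · have hn : Irrational (-u) := by simpa using hu
    have s := tail_inv_pos hn (by linarith)
    have hi : Irrational (1 / -u) := by rw [one_div]; exact irrational_inv_iff.mpr hn
    have s2 := tail_neg hi
    have e : -(1 / -u) = 1 / u := by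
      have := h.ne; field_simp
    rw [e] at s2
    exact s2.trans (s.trans (tail_neg hu))
  · exact absurd h hu.ne_zero
  · exact tail_inv_pos hu h

/-- the conjugate orbit -/
noncomputable def conjIter (x y : ℝ) : ℕ → ℝ
  | 0 => y
  | n + 1 => 1 / (conjIter x y n - (⌊gaussIter x n⌋ : ℝ))

theorem irr_conj (x : ℝ) {y : ℝ} (hy : Irrational y) (n : ℕ) : Irrational (conjIter x y n) := by
  induction n with
  | zero => exact hy
  | succ n ih => exact irr_step ih _

theorem tail_conj (x : ℝ) {y : ℝ} (hy : Irrational y) (n : ℕ) : TailEq (conjIter x y n) y := by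
  induction n with
  | zero => exact ⟨0, 0, rfl⟩
  | succ n ih =>
    have h := irr_conj x hy n
    exact (tail_inv (irr_sub h _)).trans ((tail_sub_int _ _).trans ih)

theorem floor_ge {x : ℝ} (hx : Irrational x) (n : ℕ) : (1 : ℝ) ≤ ⌊gaussIter x (n + 1)⌋ := by
  have h := one_lt_gauss hx n
  have : (1 : ℤ) ≤ ⌊gaussIter x (n + 1)⌋ := Int.le_floor.mpr (by push_cast; linarith)
  exact_mod_cast this

theorem red_step {x : ℝ} (hx : Irrational x) (y : ℝ) (n : ℕ) (h : conjIter x y (n + 1) < 0) :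
    -1 < conjIter x y (n + 2) ∧ conjIter x y (n + 2) < 0 := by
  have h1 := floor_ge hx n
  rw [conjIter]
  set b := conjIter x y (n + 1) - (⌊gaussIter x (n + 1)⌋ : ℝ) with hb
  have hb1 : b < -1 := by linarith
  constructor
  · rw [lt_div_iff_of_neg (by linarith)]; linarith
  · exact div_neg_of_pos_of_neg one_pos (by linarith)

theorem exists_neg {x y : ℝ} (hx : Irrational x) (hy : Irrational y) (hxy : x ≠ y) :
    ∃ n, conjIter x y (n + 1) < 0 := by
  by_contra! hc
  have hpos : ∀ n, 0 < conjIter x y (n + 1) := fun n =>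
    lt_of_le_of_ne (hc n) (Ne.symm (irr_conj x hy _).ne_zero)
  have hgt : ∀ n, 0 < conjIter x y n - (⌊gaussIter x n⌋ : ℝ) := by
    intro n
    have := hpos n
    rw [conjIter] at this
    exact one_div_pos.mp this
  have hy1 : ∀ n, 1 < conjIter x y (n + 1) := by
    intro n
    have h1 := floor_ge hx n
    have h2 := hgt (n + 1)
    linarith
  have hlt : ∀ n, conjIter x y n - (⌊gaussIter x n⌋ : ℝ) < 1 := by
    intro n
    have := hy1 n
    rw [conjIter] at this
    exact (one_lt_div (hgt n)).mp this
  set d : ℕ → ℝ := fun n => |gaussIter x n - conjIter x y n| with hd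
  have hd1 : ∀ n, d n < 1 := by
    intro n
    obtain ⟨h1, h2⟩ := fract_bounds (irr_gauss hx n)
    have h3 := hgt n
    have h4 := hlt n
    simp only [hd, abs_lt]
    constructor <;> linarith
  have hstep : ∀ n, d (n + 1) = d n * (gaussIter x (n + 1) * conjIter x y (n + 1)) := by
    intro n
    obtain ⟨h1, h2⟩ := fract_bounds (irr_gauss hx n)
    have h3 := hgt n
    have e : gaussIter x (n + 1) - conjIter x y (n + 1) =
        -(gaussIter x n - conjIter x y n) * (gaussIter x (n + 1) * conjIter x y (n + 1)) := by
      simp only [gaussIter, conjIter]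
      field_simp
      ring
    simp only [hd]
    rw [e, abs_mul, abs_neg, abs_of_pos (a := gaussIter x (n + 1) * conjIter x y (n + 1))]
    have := one_lt_gauss hx n
    have := hpos n
    positivity
  have hd0 : ∀ n, 0 < d n := by
    intro n
    induction n with
    | zero => exact abs_pos.mpr (sub_ne_zero.mpr hxy)
    | succ n ih =>
      rw [hstep]
      have := one_lt_gauss hx n
      have := hpos n
      positivity
  have hprod : ∀ n, 2 < gaussIter x (n + 1) * gaussIter x (n + 2) := by
    intro n
    obtain ⟨h1, h2⟩ := fract_bounds (irr_gauss hx (n + 1))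
    have h3 := floor_ge hx n
    rw [show gaussIter x (n + 2) = 1 / (gaussIter x (n + 1) - (⌊gaussIter x (n + 1)⌋ : ℝ)) from rfl,
      mul_one_div, lt_div_iff₀ h1]
    linarith
  have h2 : ∀ n, 2 * d n ≤ d (n + 2) := by
    intro n
    rw [hstep (n + 1), hstep n]
    have a1 := hprod n
    have a2 := hy1 n
    have a3 := hy1 (n + 1)
    have a4 := hd0 n
    have a5 : 1 < conjIter x y (n + 1) * conjIter x y (n + 1 + 1) := by nlinarith
    have a6 : 2 ≤ (gaussIter x (n + 1) * gaussIter x (n + 2)) *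
      (conjIter x y (n + 1) * conjIter x y (n + 1 + 1)) := by nlinarith
    calc 2 * d n ≤ ((gaussIter x (n + 1) * gaussIter x (n + 2)) *
      (conjIter x y (n + 1) * conjIter x y (n + 1 + 1))) * d n :=
          mul_le_mul_of_nonneg_right a6 a4.le
      _ = _ := by ring
  have h3 : ∀ n, 2 ^ n * d 0 ≤ d (2 * n) := by
    intro n
    induction n with
    | zero => simp
    | succ n ih =>
      have := h2 (2 * n)
      rw [show 2 * (n + 1) = 2 * n + 2 from by ring, pow_succ]
      linarith
  obtain ⟨n, hn⟩ := pow_unbounded_of_one_lt (1 / d 0) (one_lt_two (α := ℝ))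
  rw [div_lt_iff₀ (hd0 0)] at hn
  linarith [h3 n, hd1 (2 * n)]

theorem exists_red {x y : ℝ} (hx : Irrational x) (hy : Irrational y) (hxy : x ≠ y) :
    ∃ N, ∀ j, 1 < gaussIter x (N + j) ∧ -1 < conjIter x y (N + j) ∧ conjIter x y (N + j) < 0 := by
  obtain ⟨n, hn⟩ := exists_neg hx hy hxy
  have key : ∀ j, conjIter x y (n + j + 1) < 0 := by
    intro j
    induction j with
    | zero => exact hn
    | succ j ih => exact (red_step hx y (n + j) ih).2
  refine ⟨n + 2, fun j => ?_⟩
  have e : n + 2 + j = n + j + 2 := by ring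
  rw [e]
  exact ⟨one_lt_gauss hx _, red_step hx y (n + j) (key j)⟩

/-- `x, y` are the two roots of an integer form of discriminant `D` -/
def QPair (D : ℤ) (x y : ℝ) (A K C : ℤ) : Prop :=
  A ≠ 0 ∧ (A : ℝ) * (x + y) = -K ∧ (A : ℝ) * (x * y) = C ∧ K ^ 2 - 4 * A * C = D

theorem qpair_step {D : ℤ} {x y : ℝ} (hx : Irrational x) (hy : Irrational y) {A K C : ℤ}
    (h : QPair D x y A K C) (a : ℤ) :
    QPair D (1 / (x - a)) (1 / (y - a)) (A * a ^ 2 + K * a + C) (2 * A * a + K) A := by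
  obtain ⟨h0, h1, h2, h3⟩ := h
  have nx := (irr_sub hx a).ne_zero
  have ny := (irr_sub hy a).ne_zero
  have e : ((A * a ^ 2 + K * a + C : ℤ) : ℝ) = A * ((x - a) * (y - a)) := by
    push_cast
    rw [← h2, show (K : ℝ) = -(A * (x + y)) by rw [h1]; ring]
    ring
  have hA : (A : ℝ) ≠ 0 := by exact_mod_cast h0
  refine ⟨?_, ?_, ?_, ?_⟩
  · intro hz
    rw [hz] at e
    have : (A : ℝ) * ((x - a) * (y - a)) ≠ 0 := mul_ne_zero hA (mul_ne_zero nx ny)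
    exact this (by rw [← e]; simp)
  · rw [e]
    push_cast
    rw [show (K : ℝ) = -(A * (x + y)) by rw [h1]; ring]
    field_simp
    ring
  · rw [e]
    field_simp
  · rw [← h3]; ring

theorem qpair_iter {D : ℤ} {x y : ℝ} (hx : Irrational x) (hy : Irrational y)
    (h : ∃ A K C, QPair D x y A K C) (n : ℕ) :
    ∃ A K C, QPair D (gaussIter x n) (conjIter x y n) A K C := by
  induction n with
  | zero => exact h
  | succ n ih =>
    obtain ⟨A, K, C, h⟩ := ih
    exact ⟨_, _, _, qpair_step (irr_gauss hx n) (irr_conj x hy n) h _⟩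

theorem qpair_bound {D : ℤ} {x y : ℝ} {A K C : ℤ} (h : QPair D x y A K C)
    (hx : 0 < x) (hy : y < 0) :
    (A, K, C) ∈ Finset.Icc (-D) D ×ˢ (Finset.Icc (-D) D ×ˢ Finset.Icc (-D) D) := by
  obtain ⟨h0, h1, h2, h3⟩ := h
  have hA : (A : ℝ) ≠ 0 := by exact_mod_cast h0
  have hneg : (A : ℝ) * C < 0 := by
    rw [← h2]
    have : 0 < (A : ℝ) * A := mul_self_pos.mpr hA
    have : x * y < 0 := mul_neg_of_pos_of_neg hx hy
    nlinarith
  have hneg' : A * C < 0 := by exact_mod_cast hneg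
  have hC : C ≠ 0 := by rintro rfl; simp at hneg'
  have hAC : |A| * |C| = -(A * C) := by rw [← abs_mul, abs_of_neg hneg']
  have a1 : 1 ≤ |A| := Int.one_le_abs h0
  have a2 : 1 ≤ |C| := Int.one_le_abs hC
  have a3 : |A| ≤ D := by nlinarith [sq_nonneg K]
  have a4 : |C| ≤ D := by nlinarith [sq_nonneg K]
  have a5 : |K| ≤ D := by
    have : |K| ≤ K ^ 2 := by
      rw [← sq_abs]
      have := abs_nonneg K
      rcases eq_or_lt_of_le this with h | h
      · rw [← h]; norm_num
      · nlinarith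
    nlinarith
  simp only [Finset.mem_product, Finset.mem_Icc]
  exact ⟨abs_le.mp a3, abs_le.mp a5, abs_le.mp a4⟩

theorem exists_cycle {D : ℤ} {x y : ℝ} (hx : Irrational x) (hy : Irrational y) (hxy : x ≠ y)
    (h : ∃ A K C, QPair D x y A K C) :
    ∃ N P, 1 ≤ P ∧
      (∀ j, 1 < gaussIter x (N + j) ∧ -1 < conjIter x y (N + j) ∧ conjIter x y (N + j) < 0) ∧
      gaussIter x (N + P) = gaussIter x N ∧ conjIter x y (N + P) = conjIter x y N := by
  obtain ⟨N, hN⟩ := exists_red hx hy hxy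
  have hq := fun n => qpair_iter hx hy h (N + n)
  choose A K C hq using hq
  let S := Finset.Icc (-D) D ×ˢ (Finset.Icc (-D) D ×ˢ Finset.Icc (-D) D)
  let F : ℕ → S := fun n => ⟨(A n, K n, C n),
    qpair_bound (hq n) (by linarith [(hN n).1]) (hN n).2.2⟩
  obtain ⟨i, j, hij, hF⟩ := Finite.exists_ne_map_eq_of_infinite F
  wlog hlt : i < j generalizing i j
  · exact this j i hij.symm hF.symm (by omega)
  have hF' : (A i, K i, C i) = (A j, K j, C j) := congrArg Subtype.val hF
  simp only [Prod.mk.injEq] at hF'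
  obtain ⟨e1, e2, e3⟩ := hF'
  obtain ⟨p0, p1, p2, -⟩ := hq i
  obtain ⟨q0, q1, q2, -⟩ := hq j
  rw [← e1] at q1 q2
  rw [← e2] at q1
  rw [← e3] at q2
  have hA : (A i : ℝ) ≠ 0 := by exact_mod_cast p0
  have s1 := mul_left_cancel₀ hA (p1.trans q1.symm)
  have s2 := mul_left_cancel₀ hA (p2.trans q2.symm)
  have hi := hN i
  have hj := hN j
  have hX : gaussIter x (N + i) = gaussIter x (N + j) := by
    have : (gaussIter x (N + i) - gaussIter x (N + j)) *
        (gaussIter x (N + i) - conjIter x y (N + j)) = 0 := by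
      linear_combination gaussIter x (N + i) * s1 - s2
    rcases mul_eq_zero.mp this with h | h
    · linarith
    · linarith
  refine ⟨N + i, j - i, by omega, fun k => ?_, ?_, ?_⟩
  · rw [Nat.add_assoc]; exact hN _
  · rw [show N + i + (j - i) = N + j by omega, hX]
  · rw [show N + i + (j - i) = N + j by omega]; linarith

theorem cycle_iter {x y : ℝ} {N P : ℕ} (h1 : gaussIter x (N + P) = gaussIter x N)
    (h2 : conjIter x y (N + P) = conjIter x y N) (j : ℕ) :
    gaussIter x (N + j + P) = gaussIter x (N + j) ∧
    conjIter x y (N + j + P) = conjIter x y (N + j) := by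
  induction j with
  | zero => exact ⟨h1, h2⟩
  | succ j ih =>
    rw [show N + (j + 1) + P = (N + j + P) + 1 by ring, show N + (j + 1) = (N + j) + 1 by ring]
    simp only [gaussIter, conjIter, ih.1, ih.2, and_self]

theorem cycle_mul {x y : ℝ} {N P : ℕ} (h1 : gaussIter x (N + P) = gaussIter x N)
    (h2 : conjIter x y (N + P) = conjIter x y N) (k : ℕ) :
    conjIter x y (N + k * P) = conjIter x y N := by
  induction k with
  | zero => simp
  | succ k ih =>
    rw [Nat.succ_mul, ← Nat.add_assoc, (cycle_iter h1 h2 _).2, ih]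

theorem back_step {x y : ℝ} {n : ℕ} (h1 : -1 < conjIter x y n) (h2 : conjIter x y n < 0) :
    ⌊-1 / conjIter x y (n + 1)⌋ = cfTerm x n ∧
    1 / (-1 / conjIter x y (n + 1) - (⌊-1 / conjIter x y (n + 1)⌋ : ℝ)) = -1 / conjIter x y n := by
  have e : -1 / conjIter x y (n + 1) = -conjIter x y n + (cfTerm x n : ℝ) := by
    simp only [conjIter, cfTerm, div_div_eq_mul_div]; ring
  have hf : ⌊-1 / conjIter x y (n + 1)⌋ = cfTerm x n := by
    rw [e, Int.floor_add_intCast, Int.floor_eq_zero_iff.mpr ⟨by linarith, by linarith⟩, zero_add]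
  refine ⟨hf, ?_⟩
  rw [hf, e, add_sub_cancel_right, one_div_neg_eq_neg_one_div, neg_div]

theorem back_iter {x y : ℝ} {N : ℕ}
    (hN : ∀ j, -1 < conjIter x y (N + j) ∧ conjIter x y (N + j) < 0) (Q j : ℕ) (hj : j ≤ Q) :
    gaussIter (-1 / conjIter x y (N + Q)) j = -1 / conjIter x y (N + (Q - j)) := by
  induction j with
  | zero => rfl
  | succ j ih =>
    have := (back_step (hN (Q - (j + 1))).1 (hN (Q - (j + 1))).2).2
    rw [gaussIter, ih (by omega)]
    rw [show N + (Q - j) = N + (Q - (j + 1)) + 1 by omega]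
    exact this

theorem back_term {x y : ℝ} {N : ℕ}
    (hN : ∀ j, -1 < conjIter x y (N + j) ∧ conjIter x y (N + j) < 0) (Q j : ℕ) (hj : j < Q) :
    cfTerm (-1 / conjIter x y (N + Q)) j = cfTerm x (N + (Q - (j + 1))) := by
  have := (back_step (hN (Q - (j + 1))).1 (hN (Q - (j + 1))).2).1
  rw [cfTerm, back_iter hN Q j hj.le, show N + (Q - j) = N + (Q - (j + 1)) + 1 by omega]
  exact this

theorem periodic_of_cycle {x y : ℝ} {N P : ℕ} (hP : 1 ≤ P)
    (h1 : gaussIter x (N + P) = gaussIter x N)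
    (h2 : conjIter x y (N + P) = conjIter x y N) : IsEventuallyPeriodicCF x N P :=
  ⟨hP, fun j => by simp only [cfTerm, (cycle_iter h1 h2 j).1]⟩

/-- `b` is eventually the reverse of `a`. -/
theorem reverse_rel {x y : ℝ} (hy : Irrational y) {N P : ℕ}
    (hN : ∀ j, -1 < conjIter x y (N + j) ∧ conjIter x y (N + j) < 0)
    (h1 : gaussIter x (N + P) = gaussIter x N)
    (h2 : conjIter x y (N + P) = conjIter x y N) :
    ∃ i j : ℕ, ∀ k r : ℕ, j + r < k * P →
      cfTerm y (i + r) = cfTerm x (N + (k * P - (j + r + 1))) := by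
  have hi := irr_conj x hy N
  have t1 : TailEq (-1 / conjIter x y N) y := by
    have hi' : Irrational (1 / conjIter x y N) := by
      rw [one_div]; exact irrational_inv_iff.mpr hi
    rw [neg_div]
    exact (tail_neg hi').trans ((tail_inv hi).trans (tail_conj x hy N))
  obtain ⟨j, i, hij⟩ := t1
  refine ⟨i, j, fun k r hk => ?_⟩
  rw [← back_term hN (k * P) (j + r) hk, cycle_mul h1 h2]
  simp only [cfTerm, gaussIter_add, hij]

/-- bi-infinite periodic extension of a list -/
def perExt (s : List ℤ) (j : ℤ) : ℤ := s.getD (j % (s.length : ℤ)).toNat 0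

theorem perExt_nat (s : List ℤ) (j : ℕ) : perExt s (j : ℤ) = s.getD (j % s.length) 0 := by
  rw [perExt, ← Int.natCast_mod, Int.toNat_natCast]

theorem perExt_add (s : List ℤ) (j k : ℤ) : perExt s (j + k * s.length) = perExt s j := by
  rw [perExt, Int.add_mul_emod_self_right, perExt]

theorem ext_eq_of_cf {s : List ℤ} {x : ℝ} {M : ℕ} 
    (h : ∀ j : ℕ, cfTerm x (M + j) = s.getD (j % s.length) 0) (n : ℕ) (hn : M ≤ n) :
    cfTerm x n = perExt s ((n : ℤ) - M) := by
  obtain ⟨j, rfl⟩ := Nat.exists_eq_add_of_le hn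
  rw [h, ← perExt_nat]
  congr 1
  push_cast; ring

theorem rev_comb {s t : List ℤ} {x y : ℝ} (hs : IsCFPeriod s x) (ht : IsCFPeriod t y)
    {N P : ℕ} (hP : 1 ≤ P)
    (hrel : ∃ i j : ℕ, ∀ k r : ℕ, j + r < k * P →
      cfTerm y (i + r) = cfTerm x (N + (k * P - (j + r + 1)))) :
    List.IsRotated s t.reverse := by
  obtain ⟨hs0, ⟨M, hM⟩, hsm⟩ := hs
  obtain ⟨ht0, ⟨M', hM'⟩, htm⟩ := ht
  obtain ⟨i, j, hrel⟩ := hrel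
  have hp : 0 < s.length := List.length_pos_iff.mpr hs0
  have hq : 0 < t.length := List.length_pos_iff.mpr ht0
  have hpz : (0 : ℤ) < s.length := by exact_mod_cast hp
  have hqz : (0 : ℤ) < t.length := by exact_mod_cast hq
  -- eventual relation
  have A : ∀ r : ℕ, M' ≤ r →
      perExt t ((i : ℤ) + r - M') = perExt s ((N : ℤ) - j - 1 - M - r) := by
    intro r hr
    let k := s.length * (M + j + r + 1)
    have hk : M + j + r + 1 ≤ k * P := by
      have : 1 ≤ s.length * P := Nat.mul_pos hp hP
      calc M + j + r + 1 = 1 * (M + j + r + 1) := by ring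
        _ ≤ (s.length * P) * (M + j + r + 1) := Nat.mul_le_mul_right _ this
        _ = k * P := by simp only [k]; ring
    have h := hrel k r (by omega)
    rw [ext_eq_of_cf hM _ (by omega), ext_eq_of_cf hM' _ (by omega)] at h
    have e : ((N + (k * P - (j + r + 1)) : ℕ) : ℤ) - M =
        ((N : ℤ) - j - 1 - M - r) + ((M + j + r + 1 : ℕ) * P : ℤ) * s.length := by
      rw [Nat.cast_add, Nat.cast_sub (by omega)]
      simp only [k]; push_cast; ring
    rw [e, perExt_add] at h
    rw [← h]; push_cast; rfl
  obtain ⟨d, hd⟩ : ∃ d : ℤ, ∀ r : ℤ, perExt t r = perExt s (d - r) := by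
    refine ⟨(N : ℤ) - j - 1 - M + i - M', fun r => ?_⟩
    let w : ℤ := |r - i + M'| + M'
    have hw0 : 0 ≤ w := by positivity
    have hge : (M' : ℤ) ≤ r - i + M' + w * (s.length * t.length) := by
      have h1 : (1 : ℤ) ≤ s.length * t.length := by
        have : (0 : ℤ) < s.length * t.length := mul_pos hpz hqz
        linarith
      have h2 : w ≤ w * (s.length * t.length) := le_mul_of_one_le_right hw0 h1
      have := neg_abs_le (r - i + M')
      simp only [w] at h2 ⊢
      linarith
    obtain ⟨u, hu⟩ := Int.eq_ofNat_of_zero_le (le_trans (Int.natCast_nonneg M') hge)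
    have h := A u (by omega)
    rw [← Int.ofNat_eq_natCast u, Int.ofNat_eq_natCast, ← hu] at h
    have e1 : (i : ℤ) + (r - i + M' + w * (s.length * t.length)) - M' =
      r + (w * s.length) * t.length := by ring
    have e2 : (N : ℤ) - j - 1 - M - (r - i + M' + w * (s.length * t.length)) =
      ((N : ℤ) - j - 1 - M + i - M' - r) + (-(w * t.length)) * s.length := by ring
    rw [e1, e2, perExt_add, perExt_add] at h
    exact h
  have hlen : s.length = t.length := by
    apply le_antisymm
    · apply hsm _ hq
      refine ⟨M, hq, fun l => ?_⟩
      rw [ext_eq_of_cf hM _ (by omega), ext_eq_of_cf hM _ (by omega)]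
      have g : ∀ z, perExt s z = perExt t (d - z) := fun z => by rw [hd]; congr 1; ring
      rw [g, g, ← perExt_add t _ 1]
      congr 1; push_cast; ring
    · apply htm _ hp
      refine ⟨M', hp, fun l => ?_⟩
      rw [ext_eq_of_cf hM' _ (by omega), ext_eq_of_cf hM' _ (by omega), hd, hd,
        ← perExt_add s _ 1]
      congr 1; push_cast; ring
  have hget : ∀ (l : List ℤ) (n : ℕ) (hn : n < l.length), l[n] = perExt l (n : ℤ) := by
    intro l n hn
    rw [perExt_nat, Nat.mod_eq_of_lt hn, List.getD_eq_getElem _ _ hn]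
  refine ⟨((d - s.length + 1) % s.length).toNat, ?_⟩
  apply List.ext_getElem
  · simp [hlen]
  · intro n h1 h2
    rw [List.getElem_rotate, List.getElem_reverse, hget, hget, hd]
    rw [perExt_nat, Nat.mod_mod, ← perExt_nat]
    have e0 : (((d - s.length + 1) % s.length).toNat : ℤ) = (d - s.length + 1) % s.length :=
      Int.toNat_of_nonneg (Int.emod_nonneg _ hpz.ne')
    have e1 := Int.emod_add_mul_ediv (d - s.length + 1) s.length
    have hn : n < t.length := by simpa using h2
    have e2 : ((t.length - 1 - n : ℕ) : ℤ) = (t.length : ℤ) - 1 - n := by omega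
    rw [e2, ← perExt_add s _ ((d - s.length + 1) / s.length)]
    congr 1
    push_cast
    rw [e0, ← hlen]
    linear_combination e1

theorem disc_irr {D : ℤ} (hpos : 0 < D) (hsq : ¬ IsSquare D) : Irrational (Real.sqrt (D : ℝ)) :=
  (irrational_sqrt_intCast_iff).mpr ⟨hsq, hpos.le⟩

/-- The continued fractions of the roots `ξ⁺` and `ξ⁻` of `m*ξ^2 + k*ξ + n = 0` are
eventually periodic, and their periods are, up to cyclic permutation, the reverses
of each other. -/
theorem statement0 (m n k : ℤ)
    (hpos : 0 < formDisc (m, n, k)) (hsq : ¬ IsSquare (formDisc (m, n, k))) :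
    (∃ N P : ℕ, IsEventuallyPeriodicCF (xiPlus (m, n, k)) N P) ∧
    (∃ N P : ℕ, IsEventuallyPeriodicCF (xiMinus (m, n, k)) N P) ∧
    (∀ s t : List ℤ, IsCFPeriod s (xiPlus (m, n, k)) → IsCFPeriod t (xiMinus (m, n, k)) →
      List.IsRotated s t.reverse) := by
  have hm : m ≠ 0 := by
    rintro rfl
    apply hsq
    exact ⟨k, by simp [formDisc]; ring⟩
  have hmr : (m : ℝ) ≠ 0 := by exact_mod_cast hm
  have hirr := disc_irr hpos hsq
  have hD : ((formDisc (m, n, k) : ℤ) : ℝ) = (k : ℝ) ^ 2 - 4 * m * n := by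
    simp [formDisc]
  have hsqr : Real.sqrt ((formDisc (m, n, k) : ℤ) : ℝ) ^ 2 = (k : ℝ) ^ 2 - 4 * m * n := by
    rw [Real.sq_sqrt (by exact_mod_cast hpos.le), hD]
  have ex : xiPlus (m, n, k) =
    (-(k : ℝ) + Real.sqrt ((formDisc (m, n, k) : ℤ) : ℝ)) / (2 * (m : ℝ)) := rfl
  have ey : xiMinus (m, n, k) =
    (-(k : ℝ) - Real.sqrt ((formDisc (m, n, k) : ℤ) : ℝ)) / (2 * (m : ℝ)) := rfl
  set w := Real.sqrt ((formDisc (m, n, k) : ℤ) : ℝ) with hw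
  set x := xiPlus (m, n, k) with hxdef
  set y := xiMinus (m, n, k) with hydef
  have hx : Irrational x := by
    rintro ⟨q, hq⟩
    apply hirr
    refine ⟨q * (2 * m) + k, ?_⟩
    push_cast
    rw [hq, ex]; field_simp; ring
  have hy : Irrational y := by
    rintro ⟨q, hq⟩
    apply hirr
    refine ⟨-(q * (2 * m) + k), ?_⟩
    push_cast
    rw [hq, ey]; field_simp; ring
  have hxy : x ≠ y := by
    intro h
    rw [ex, ey] at h
    field_simp at h
    exact hirr.ne_zero (by linarith)
  have hsum : (m : ℝ) * (x + y) = -(k : ℤ) := by rw [ex, ey]; field_simp; ring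
  have hprod : (m : ℝ) * (x * y) = (n : ℤ) := by
    rw [ex, ey]; field_simp; linear_combination -hsqr
  have q1 : QPair (formDisc (m, n, k)) x y m k n := ⟨hm, hsum, hprod, by simp [formDisc]⟩
  have q2 : QPair (formDisc (m, n, k)) y x m k n :=
    ⟨hm, by rw [add_comm]; exact hsum, by rw [mul_comm y x]; exact hprod, by simp [formDisc]⟩
  obtain ⟨N, P, hP, hN, h1, h2⟩ := exists_cycle hx hy hxy ⟨_, _, _, q1⟩
  obtain ⟨N', P', hP', hN', h1', h2'⟩ := exists_cycle hy hx hxy.symm ⟨_, _, _, q2⟩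
  refine ⟨⟨N, P, periodic_of_cycle hP h1 h2⟩, ⟨N', P', periodic_of_cycle hP' h1' h2'⟩, ?_⟩
  intro s t hs ht
  exact rev_comb hs ht hP (reverse_rel hy (fun j => (hN j).2) h1 h2)
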